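/- (Group Lasso error bound, Gaussian noise.) Consider W = XB + Z with W ∈ ℝ^{n×r}, X ∈ ℝ^{n×p}, B ∈ ℝ^{p×r} having at most s nonzero rows (s ≥ 1), and Z having i.i.d. N(0,σ²) entries. Let B̂ minimize ‖W − XB‖_F²/2 + λ‖B‖_{2,1} over ℝ^{p×r}. Suppose Condition SE(s_*, c_*, K) holds with an absolute constant K > 1 and positive constants s_*, c_* satisfying s_* ≥ 2s and 6c_* ≤ √(s_*/s − 1). For any η ∈ (0,1), if λ ≥ 2σ max_j ‖X_{*j}‖ (√r + √(2 log(p/η))), then with probability at least 1 − η, ‖B̂ − B‖_F ≤ 3(1 + (4c_*)^{-1})√s λ / κ_-²(s_*). -/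

import Mathlib

open MeasureTheory ProbabilityTheory Matrix Set
open scoped ENNReal NNReal

noncomputable section

/-- Euclidean (ℓ₂) norm of a finitely indexed real vector. -/
def l2norm {I : Type*} [Fintype I] (v : I → ℝ) : ℝ := Real.sqrt (∑ i, v i ^ 2)

/-- Frobenius norm of a real matrix. -/
def frobNorm {I J : Type*} [Fintype I] [Fintype J] (M : Matrix I J ℝ) : ℝ :=
  Real.sqrt (∑ i, ∑ j, M i j ^ 2)

/-- ℓ₂/ℓ₁ norm: the sum of the ℓ₂ norms of the rows. -/
def norm21 {I J : Type*} [Fintype I] [Fintype J] (M : Matrix I J ℝ) : ℝ :=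
  ∑ i, l2norm (M i)

open Classical in
/-- Row support: indices of nonzero rows. -/
def rowSupport {I J : Type*} [Fintype I] [Fintype J] (M : Matrix I J ℝ) : Finset I :=
  Finset.univ.filter (fun i => M i ≠ 0)

/-- The j-th largest singular value (j ≥ 1), via the Courant–Fischer max–min
characterization: `σ_j(M) = max_{dim V = j} min_{v ∈ V, ‖v‖=1} ‖Mv‖`. -/
def singularValue {I J : Type*} [Fintype I] [Fintype J] (M : Matrix I J ℝ) (j : ℕ) : ℝ :=
  sSup { t | ∃ V : Submodule ℝ (J → ℝ), Module.finrank ℝ V = j ∧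
    t = sInf { u | ∃ v ∈ V, l2norm v = 1 ∧ u = l2norm (M.mulVec v) } }

/-- Operator norm (largest singular value). -/
def opNorm {I J : Type*} [Fintype I] [Fintype J] (M : Matrix I J ℝ) : ℝ :=
  sSup { t | ∃ v : J → ℝ, l2norm v = 1 ∧ t = l2norm (M.mulVec v) }

/-- Schatten-q norm. -/
def schattenNorm {I J : Type*} [Fintype I] [Fintype J] (M : Matrix I J ℝ) (q : ℝ) : ℝ :=
  (∑ i ∈ Finset.Icc 1 (min (Fintype.card I) (Fintype.card J)), singularValue M i ^ q) ^ (1 / q)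

/-- Squared lower k-sparse Riesz constant `κ₋²(k)`:
the minimum over column subsets B with |B| = k of the smallest eigenvalue of X_B' X_B. -/
def kappaMinusSq {n p : ℕ} (X : Matrix (Fin n) (Fin p) ℝ) (k : ℕ) : ℝ :=
  sInf { t | ∃ B : Finset (Fin p), B.card = k ∧ ∃ v : Fin p → ℝ,
    (∀ i, i ∉ B → v i = 0) ∧ l2norm v = 1 ∧ t = l2norm (X.mulVec v) ^ 2 }

/-- Squared upper k-sparse Riesz constant `κ₊²(k)`. -/
def kappaPlusSq {n p : ℕ} (X : Matrix (Fin n) (Fin p) ℝ) (k : ℕ) : ℝ :=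
  sSup { t | ∃ B : Finset (Fin p), B.card = k ∧ ∃ v : Fin p → ℝ,
    (∀ i, i ∉ B → v i = 0) ∧ l2norm v = 1 ∧ t = l2norm (X.mulVec v) ^ 2 }

def kappaMinus {n p : ℕ} (X : Matrix (Fin n) (Fin p) ℝ) (k : ℕ) : ℝ :=
  Real.sqrt (kappaMinusSq X k)

def kappaPlus {n p : ℕ} (X : Matrix (Fin n) (Fin p) ℝ) (k : ℕ) : ℝ :=
  Real.sqrt (kappaPlusSq X k)

/-- Membership in the parameter space Θ(s, r, d, γ): rank r, all nonzero singular values in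
(d, γd], and at most s nonzero rows. (Singular values are automatically nonincreasing.) -/
def memTheta {p m : ℕ} (A : Matrix (Fin p) (Fin m) ℝ) (s r : ℕ) (d γ : ℝ) : Prop :=
  A.rank = r ∧ 0 < d ∧ singularValue A 1 ≤ γ * d ∧ d < singularValue A r ∧
    (rowSupport A).card ≤ s

/-- `V` is a matrix of top-r right singular vectors of `M`: the columns of `V` are orthonormal
eigenvectors of `MᵀM`, the j-th column with eigenvalue `σ_j(M)²`. -/
def IsRightSingularVectors {I J : Type*} [Fintype I] [Fintype J] {r : ℕ}
    (M : Matrix I J ℝ) (V : Matrix J (Fin r) ℝ) : Prop :=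
  Vᵀ * V = 1 ∧ ∀ j : Fin r,
    (Mᵀ * M).mulVec (fun i => V i j) = (singularValue M (j.1 + 1)) ^ 2 • (fun i => V i j)

/-- `U` is a matrix of top-r left singular vectors of `M`. -/
def IsLeftSingularVectors {I J : Type*} [Fintype I] [Fintype J] {r : ℕ}
    (M : Matrix I J ℝ) (U : Matrix I (Fin r) ℝ) : Prop :=
  IsRightSingularVectors Mᵀ U

instance matrixMeasurableSpace {n m : ℕ} : MeasurableSpace (Matrix (Fin n) (Fin m) ℝ) :=
  (inferInstance : MeasurableSpace (Fin n → Fin m → ℝ))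

/-- Law of an n×m random matrix with i.i.d. N(0, v) entries. -/
def gaussianMatrix (n m : ℕ) (v : ℝ≥0) : Measure (Matrix (Fin n) (Fin m) ℝ) :=
  Measure.pi fun _ : Fin n => Measure.pi fun _ : Fin m => gaussianReal 0 v

open Classical in
/-- Kullback–Leibler divergence D(P‖Q). -/
def klDivM {Ω : Type*} [MeasurableSpace Ω] (P Q : Measure Ω) : ℝ≥0∞ :=
  if P ≪ Q ∧ Integrable (fun x => Real.log (P.rnDeriv Q x).toReal) P
  then ENNReal.ofReal (∫ x, Real.log (P.rnDeriv Q x).toReal ∂P)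
  else ∞

/-- ε-packing number of T with respect to the distance ρ: the maximal cardinality of a subset
of T whose pairwise ρ-distances are all at least ε. -/
def packingNumber {α : Type*} (T : Set α) (ρ : α → α → ℝ) (ε : ℝ) : ℕ :=
  sSup { k | ∃ S : Finset α, ↑S ⊆ T ∧ (∀ x ∈ S, ∀ y ∈ S, x ≠ y → ε ≤ ρ x y) ∧ S.card = k }

/-- Moore–Penrose pseudoinverse (characterized by the four Penrose equations). -/
def IsMoorePenrose {k : ℕ} (M Mi : Matrix (Fin k) (Fin k) ℝ) : Prop :=
  M * Mi * M = M ∧ Mi * M * Mi = Mi ∧ (M * Mi)ᵀ = M * Mi ∧ (Mi * M)ᵀ = Mi * M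

/-!
Write `E = B̂ - B` and suppose that every row of `Xᵀ Z` has norm at most `λ / 2`. Testing the
variational inequality at `B̂` against `B̂` with its rows in a set `A ⊇ supp B` replaced by those
of `B` bounds `⟨X E, X E_A⟩` by `(λ / 2) (3 ∑_{supp B} ‖E_i‖ - ∑_{A \ supp B} ‖E_i‖)`; for `A` the
set of all rows this is the cone condition `∑_{(supp B)ᶜ} ‖E_i‖ ≤ 3 ∑_{supp B} ‖E_i‖`. Now let `A`
add to `supp B` the `s_* - s` largest remaining rows of `E`. Cutting the rows outside `A` into
blocks of decreasing size, sparse Riesz bounds on pairs of disjointly supported matrices show that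
these rows contribute at most half of `κ₋²(s_*) ‖E_A‖²` to `⟨X E, X E_A⟩`, so `‖E_A‖`, and with it
`‖E‖`, is of order `√s λ / κ₋²(s_*)`. The rows of `Xᵀ Z` are Gaussian vectors of scale `σ
‖X_{*j}‖`, so Chernoff's bound for the chi-square law and a union bound over `j` give the
condition on `Xᵀ Z` with probability at least `1 - η`.
-/

section Norms

variable {I J L : Type*} [Fintype I] [Fintype J] [Fintype L]

theorem l2norm_eq_norm (v : I → ℝ) : l2norm v = ‖WithLp.toLp 2 v‖ := by
  simp [l2norm, EuclideanSpace.norm_eq]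

theorem l2norm_nonneg (v : I → ℝ) : 0 ≤ l2norm v :=
  Real.sqrt_nonneg _

theorem l2norm_pos {v : I → ℝ} (hv : v ≠ 0) : 0 < l2norm v := by
  rw [l2norm_eq_norm, norm_pos_iff]
  simpa using hv

theorem l2norm_sq (v : I → ℝ) : l2norm v ^ 2 = ∑ i, v i ^ 2 :=
  Real.sq_sqrt (by positivity)

theorem l2norm_add_le (v w : I → ℝ) : l2norm (v + w) ≤ l2norm v + l2norm w := by
  simpa only [l2norm_eq_norm, WithLp.toLp_add] using
    norm_add_le (WithLp.toLp 2 v) (WithLp.toLp 2 w)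

theorem l2norm_sub_le (v w : I → ℝ) : l2norm (v - w) ≤ l2norm v + l2norm w := by
  simpa only [l2norm_eq_norm, WithLp.toLp_sub] using
    norm_sub_le (WithLp.toLp 2 v) (WithLp.toLp 2 w)

theorem l2norm_smul (c : ℝ) (v : I → ℝ) : l2norm (c • v) = |c| * l2norm v := by
  simpa only [l2norm_eq_norm, WithLp.toLp_smul, Real.norm_eq_abs] using
    norm_smul c (WithLp.toLp 2 v)

theorem dotProduct_le_l2norm_mul_l2norm (v w : I → ℝ) : v ⬝ᵥ w ≤ l2norm v * l2norm w :=
  Real.sum_mul_le_sqrt_mul_sqrt _ _ _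

/-- The Frobenius inner product of real matrices, packaged as a bilinear form so that the `map_*`
simp lemmas expand it. -/
def frobInner : LinearMap.BilinForm ℝ (Matrix I J ℝ) :=
  LinearMap.mk₂ ℝ (fun U V => (Uᵀ * V).trace)
    (fun _ _ _ => by simp [Matrix.add_mul]) (fun _ _ _ => by simp)
    (fun _ _ _ => by simp [Matrix.mul_add]) (fun _ _ _ => by simp)

theorem frobInner_comm (U V : Matrix I J ℝ) : frobInner U V = frobInner V U := by
  simp [frobInner, ← Matrix.trace_transpose (Uᵀ * V)]

theorem frobInner_mul_right (U : Matrix I J ℝ) (X : Matrix I L ℝ) (V : Matrix L J ℝ) :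
    frobInner U (X * V) = frobInner (Xᵀ * U) V := by
  simp [frobInner, Matrix.mul_assoc]

theorem frobInner_eq_sum_dotProduct (U V : Matrix I J ℝ) : frobInner U V = ∑ i, U i ⬝ᵥ V i := by
  simp only [frobInner, LinearMap.mk₂_apply, Matrix.trace, Matrix.diag, Matrix.mul_apply,
    Matrix.transpose_apply, dotProduct]
  exact Finset.sum_comm

theorem frobNorm_sq_eq_sum_rows (M : Matrix I J ℝ) : frobNorm M ^ 2 = ∑ i, l2norm (M i) ^ 2 := by
  simp only [l2norm_sq]
  exact Real.sq_sqrt (by positivity)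

theorem frobNorm_sq_eq_sum_cols (M : Matrix I J ℝ) :
    frobNorm M ^ 2 = ∑ j, l2norm (Mᵀ j) ^ 2 := by
  simp only [frobNorm_sq_eq_sum_rows, l2norm_sq, Matrix.transpose_apply]
  exact Finset.sum_comm

theorem frobInner_self (M : Matrix I J ℝ) : frobInner M M = frobNorm M ^ 2 := by
  rw [frobNorm_sq_eq_sum_rows, frobInner_eq_sum_dotProduct]
  simp only [l2norm_sq, dotProduct, ← sq]

theorem frobNorm_smul_add_smul_sq (a b : ℝ) (U V : Matrix I J ℝ) :
    frobNorm (a • U + b • V) ^ 2 =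
      a ^ 2 * frobNorm U ^ 2 + 2 * a * b * frobInner U V + b ^ 2 * frobNorm V ^ 2 := by
  simp only [← frobInner_self, map_add, map_smul, LinearMap.add_apply, LinearMap.smul_apply,
    smul_eq_mul, frobInner_comm V U]
  ring

theorem frobNorm_nonneg (M : Matrix I J ℝ) : 0 ≤ frobNorm M :=
  Real.sqrt_nonneg _

theorem frobNorm_eq_zero {M : Matrix I J ℝ} : frobNorm M = 0 ↔ M = 0 := by
  rw [frobNorm, Real.sqrt_eq_zero (by positivity), Fintype.sum_eq_zero_iff_of_nonneg fun i => by
    positivity]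
  simp [funext_iff, Fintype.sum_eq_zero_iff_of_nonneg (f := fun j => M _ j ^ 2)
    fun _ => sq_nonneg _, ← Matrix.ext_iff]

theorem frobInner_le_mul_norm21 {U : Matrix I J ℝ} {c : ℝ} (hU : ∀ i, l2norm (U i) ≤ c)
    (V : Matrix I J ℝ) : frobInner U V ≤ c * norm21 V := by
  rw [frobInner_eq_sum_dotProduct, norm21, Finset.mul_sum]
  gcongr with i
  exact (dotProduct_le_l2norm_mul_l2norm _ _).trans
    (mul_le_mul_of_nonneg_right (hU i) (l2norm_nonneg _))

theorem convexOn_norm21 : ConvexOn ℝ Set.univ (norm21 : Matrix I J ℝ → ℝ) := by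
  refine ⟨convex_univ, fun U _ V _ a b ha hb _ => ?_⟩
  simp only [norm21, smul_eq_mul, Finset.mul_sum, ← Finset.sum_add_distrib]
  gcongr with i
  calc l2norm (a • U i + b • V i) ≤ l2norm (a • U i) + l2norm (b • V i) := l2norm_add_le _ _
    _ = a * l2norm (U i) + b * l2norm (V i) := by
      rw [l2norm_smul, l2norm_smul, abs_of_nonneg ha, abs_of_nonneg hb]

end Norms

section RowRestrict

variable {I J : Type*}

/-- The matrix that agrees with `M` on the rows in `A` and vanishes on the other rows. -/
def rowRestrict (A : Finset I) (M : Matrix I J ℝ) : Matrix I J ℝ :=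
  Set.indicator (A : Set I) M

variable {A C : Finset I} {i : I}

theorem rowRestrict_of_mem (hi : i ∈ A) (M : Matrix I J ℝ) : rowRestrict A M i = M i :=
  Set.indicator_of_mem (Finset.mem_coe.2 hi) M

theorem rowRestrict_of_notMem (hi : i ∉ A) (M : Matrix I J ℝ) : rowRestrict A M i = 0 :=
  Set.indicator_of_notMem (Finset.mem_coe.not.2 hi) M

theorem rowRestrict_union [DecidableEq I] (h : Disjoint A C) (M : Matrix I J ℝ) :
    rowRestrict (A ∪ C) M = rowRestrict A M + rowRestrict C M := by
  rw [rowRestrict, Finset.coe_union]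
  exact Set.indicator_union_of_disjoint (Finset.disjoint_coe.2 h) M

variable [Fintype I]

theorem rowRestrict_univ (M : Matrix I J ℝ) : rowRestrict Finset.univ M = M := by
  rw [rowRestrict, Finset.coe_univ]
  exact Set.indicator_univ M

theorem rowRestrict_add_rowRestrict_compl [DecidableEq I] (A : Finset I) (M : Matrix I J ℝ) :
    rowRestrict A M + rowRestrict Aᶜ M = M := by
  rw [← rowRestrict_union disjoint_compl_right, Finset.union_compl, rowRestrict_univ]

variable [Fintype J]

theorem notMem_rowSupport {M : Matrix I J ℝ} : i ∉ rowSupport M ↔ M i = 0 := by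
  simp [rowSupport]

theorem rowSupport_smul_add_smul_subset [DecidableEq I] (a b : ℝ) (U V : Matrix I J ℝ) :
    rowSupport (a • U + b • V) ⊆ rowSupport U ∪ rowSupport V := by
  intro i hi
  contrapose! hi
  rw [Finset.notMem_union, notMem_rowSupport, notMem_rowSupport] at hi
  rw [notMem_rowSupport]
  change a • U i + b • V i = 0
  rw [hi.1, hi.2, smul_zero, smul_zero, add_zero]

theorem rowSupport_rowRestrict_subset (A : Finset I) (M : Matrix I J ℝ) :
    rowSupport (rowRestrict A M) ⊆ A := by
  intro i hi
  contrapose! hi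
  rw [notMem_rowSupport, rowRestrict_of_notMem hi]

theorem norm21_rowRestrict (A : Finset I) (M : Matrix I J ℝ) :
    norm21 (rowRestrict A M) = ∑ i ∈ A, l2norm (M i) := by
  rw [norm21, ← Finset.sum_subset A.subset_univ fun i _ hi => by
    simp [rowRestrict_of_notMem hi, l2norm]]
  exact Finset.sum_congr rfl fun i hi => by rw [rowRestrict_of_mem hi]

theorem frobNorm_rowRestrict_sq (A : Finset I) (M : Matrix I J ℝ) :
    frobNorm (rowRestrict A M) ^ 2 = ∑ i ∈ A, l2norm (M i) ^ 2 := by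
  rw [frobNorm_sq_eq_sum_rows, ← Finset.sum_subset A.subset_univ fun i _ hi => by
    simp [rowRestrict_of_notMem hi, l2norm]]
  exact Finset.sum_congr rfl fun i hi => by rw [rowRestrict_of_mem hi]

theorem frobNorm_rowRestrict (A : Finset I) (M : Matrix I J ℝ) :
    frobNorm (rowRestrict A M) = √(∑ i ∈ A, l2norm (M i) ^ 2) := by
  rw [← frobNorm_rowRestrict_sq, Real.sqrt_sq (frobNorm_nonneg _)]

theorem frobNorm_le_rowRestrict_add_compl [DecidableEq I] (A : Finset I) (M : Matrix I J ℝ) :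
    frobNorm M ≤ frobNorm (rowRestrict A M) + frobNorm (rowRestrict Aᶜ M) := by
  have hA := frobNorm_nonneg (rowRestrict A M)
  have hAc := frobNorm_nonneg (rowRestrict Aᶜ M)
  have hsum : frobNorm M ^ 2 =
      frobNorm (rowRestrict A M) ^ 2 + frobNorm (rowRestrict Aᶜ M) ^ 2 := by
    rw [frobNorm_rowRestrict_sq, frobNorm_rowRestrict_sq, frobNorm_sq_eq_sum_rows,
      Finset.sum_add_sum_compl]
  refine abs_le_of_sq_le_sq ?_ (by positivity) |>.trans' (le_abs_self _)
  nlinarith [mul_nonneg hA hAc]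

theorem frobInner_eq_zero_of_disjoint {U V : Matrix I J ℝ}
    (h : Disjoint (rowSupport U) (rowSupport V)) : frobInner U V = 0 := by
  rw [frobInner_eq_sum_dotProduct]
  refine Finset.sum_eq_zero fun i _ => ?_
  by_cases hi : i ∈ rowSupport U
  · rw [notMem_rowSupport.1 (Finset.disjoint_left.1 h hi), dotProduct_zero]
  · rw [notMem_rowSupport.1 hi, zero_dotProduct]

end RowRestrict

section GroupLasso

variable {N I J : Type*} [Fintype N] [Fintype I] [Fintype J]

/-- `Bh` is a group Lasso estimator: a minimizer of `B' ↦ ‖W - X B'‖_F² / 2 + lam * ‖B'‖_{2,1}`. -/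
def IsGroupLasso (X : Matrix N I ℝ) (W : Matrix N J ℝ) (lam : ℝ) (Bh : Matrix I J ℝ) : Prop :=
  ∀ B' : Matrix I J ℝ, frobNorm (W - X * Bh) ^ 2 / 2 + lam * norm21 Bh ≤
    frobNorm (W - X * B') ^ 2 / 2 + lam * norm21 B'

variable {X : Matrix N I ℝ} {lam : ℝ} {Bh : Matrix I J ℝ}

theorem IsGroupLasso.frobInner_residual_le {W : Matrix N J ℝ} (h : IsGroupLasso X W lam Bh)
    (hlam : 0 ≤ lam) (B' : Matrix I J ℝ) :
    frobInner (W - X * Bh) (X * (B' - Bh)) ≤ lam * (norm21 B' - norm21 Bh) := by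
  set R := W - X * Bh with hR
  set V := X * (B' - Bh) with hV
  have hsegment : ∀ t ∈ Set.Ioo (0 : ℝ) 1,
      frobInner R V ≤ lam * (norm21 B' - norm21 Bh) + t * (frobNorm V ^ 2 / 2) := by
    rintro t ⟨ht0, ht1⟩
    have hmin := h ((1 - t) • Bh + t • B')
    have hres : W - X * ((1 - t) • Bh + t • B') = (1 : ℝ) • R + (-t) • V := by
      simp only [hR, hV, Matrix.mul_add, Matrix.mul_sub, Matrix.mul_smul]
      module
    have hconv := mul_le_mul_of_nonneg_left (convexOn_norm21.2 (Set.mem_univ Bh) (Set.mem_univ B')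
      (sub_nonneg.2 ht1.le) ht0.le (sub_add_cancel 1 t)) hlam
    rw [hres, frobNorm_smul_add_smul_sq] at hmin
    refine le_of_mul_le_mul_left ?_ ht0
    simp only [smul_eq_mul] at hconv
    linarith
  have hlim : Filter.Tendsto
      (fun t : ℝ => lam * (norm21 B' - norm21 Bh) + t * (frobNorm V ^ 2 / 2))
      (nhdsWithin 0 (Set.Ioi 0)) (nhds (lam * (norm21 B' - norm21 Bh))) := by
    refine tendsto_nhdsWithin_of_tendsto_nhds (Continuous.tendsto' (by fun_prop) _ _ ?_)
    simp
  exact ge_of_tendsto hlim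
    (Filter.eventually_of_mem (Ioo_mem_nhdsGT one_pos) hsegment)

variable [DecidableEq I] {B : Matrix I J ℝ} {A : Finset I}

theorem norm21_sub_rowRestrict_sub_add_le (hA : rowSupport B ⊆ A) :
    norm21 (Bh - rowRestrict A (Bh - B)) + ∑ i ∈ A \ rowSupport B, l2norm ((Bh - B) i) ≤
      norm21 Bh + ∑ i ∈ rowSupport B, l2norm ((Bh - B) i) := by
  rw [norm21, norm21, ← Finset.univ_inter (A \ rowSupport B), ← Finset.univ_inter (rowSupport B),
    ← Finset.sum_ite_mem, ← Finset.sum_ite_mem, ← Finset.sum_add_distrib,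
    ← Finset.sum_add_distrib]
  refine Finset.sum_le_sum fun i _ => ?_
  change l2norm (Bh i - rowRestrict A (Bh - B) i) + _ ≤ _
  by_cases hiS : i ∈ rowSupport B
  · rw [rowRestrict_of_mem (hA hiS), if_neg (by simp [hiS]), if_pos hiS, add_zero]
    exact l2norm_sub_le _ _
  · have hEi : (Bh - B) i = Bh i :=
      (congrArg (Bh i - ·) (notMem_rowSupport.1 hiS)).trans (sub_zero _)
    by_cases hiA : i ∈ A
    · rw [rowRestrict_of_mem hiA, if_pos (by simp [hiA, hiS]), if_neg hiS, hEi]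
      simp [l2norm]
    · rw [rowRestrict_of_notMem hiA, if_neg (by simp [hiA]), if_neg hiS, sub_zero]

variable {Z : Matrix N J ℝ}

/- The competitor in the variational inequality is `Bh` with its rows in `A` replaced by those of
`B`. -/
theorem IsGroupLasso.frobInner_mul_rowRestrict_le (h : IsGroupLasso X (X * B + Z) lam Bh)
    (hlam : 0 ≤ lam) (hZ : ∀ i, l2norm ((Xᵀ * Z) i) ≤ lam / 2) (hA : rowSupport B ⊆ A) :
    frobInner (X * (Bh - B)) (X * rowRestrict A (Bh - B)) ≤
      lam / 2 * (3 * ∑ i ∈ rowSupport B, l2norm ((Bh - B) i) -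
        ∑ i ∈ A \ rowSupport B, l2norm ((Bh - B) i)) := by
  set E := Bh - B with hE
  have hvar := h.frobInner_residual_le hlam (Bh - rowRestrict A E)
  have hres : X * B + Z - X * Bh = Z - X * E := by
    rw [hE, Matrix.mul_sub]
    abel
  have hnoise : frobInner Z (X * rowRestrict A E) ≤ lam / 2 * ∑ i ∈ A, l2norm (E i) := by
    rw [frobInner_mul_right, ← norm21_rowRestrict]
    exact frobInner_le_mul_norm21 hZ _
  have hpenalty := mul_le_mul_of_nonneg_left (norm21_sub_rowRestrict_sub_add_le (Bh := Bh) hA) hlam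
  rw [hres, sub_sub_cancel_left, Matrix.mul_neg, map_neg, map_sub, LinearMap.sub_apply] at hvar
  rw [← Finset.sum_sdiff hA] at hnoise
  linarith

theorem IsGroupLasso.sum_compl_rowSupport_le (h : IsGroupLasso X (X * B + Z) lam Bh)
    (hlam : 0 < lam) (hZ : ∀ i, l2norm ((Xᵀ * Z) i) ≤ lam / 2) :
    ∑ i ∈ (rowSupport B)ᶜ, l2norm ((Bh - B) i) ≤
      3 * ∑ i ∈ rowSupport B, l2norm ((Bh - B) i) := by
  have henergy := h.frobInner_mul_rowRestrict_le hlam.le hZ (rowSupport B).subset_univ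
  rw [rowRestrict_univ, frobInner_self, ← Finset.compl_eq_univ_sdiff] at henergy
  exact sub_nonneg.1 (nonneg_of_mul_nonneg_right ((sq_nonneg _).trans henergy) (half_pos hlam))

end GroupLasso

section SparseRiesz

theorem l2norm_mulVec_sq_le {I J : Type*} [Fintype I] [Fintype J] (M : Matrix I J ℝ) (v : J → ℝ) :
    l2norm (M *ᵥ v) ^ 2 ≤ frobNorm M ^ 2 * l2norm v ^ 2 := by
  rw [frobNorm_sq_eq_sum_rows, l2norm_sq, Finset.sum_mul]
  gcongr with i
  rw [l2norm_sq, l2norm_sq]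
  exact Finset.sum_mul_sq_le_sq_mul_sq _ _ _

variable {n p k : ℕ} {X : Matrix (Fin n) (Fin p) ℝ}

/-- The values `‖X v‖²` over unit vectors `v` supported on `k` coordinates, whose infimum and
supremum are the squared sparse Riesz constants `κ₋²(k)` and `κ₊²(k)`. -/
def sparseRayleighQuotients (X : Matrix (Fin n) (Fin p) ℝ) (k : ℕ) : Set ℝ :=
  {t | ∃ C : Finset (Fin p), C.card = k ∧ ∃ v : Fin p → ℝ,
    (∀ i, i ∉ C → v i = 0) ∧ l2norm v = 1 ∧ t = l2norm (X *ᵥ v) ^ 2}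

theorem bddBelow_sparseRayleighQuotients : BddBelow (sparseRayleighQuotients X k) := by
  refine ⟨0, ?_⟩
  rintro _ ⟨_, _, _, _, _, rfl⟩
  positivity

theorem bddAbove_sparseRayleighQuotients : BddAbove (sparseRayleighQuotients X k) := by
  refine ⟨frobNorm X ^ 2, ?_⟩
  rintro _ ⟨_, _, v, _, hv, rfl⟩
  simpa [hv] using l2norm_mulVec_sq_le X v

theorem div_l2norm_mem_sparseRayleighQuotients (hk : k ≤ p) {C : Finset (Fin p)} (hC : C.card ≤ k)
    {v : Fin p → ℝ} (hv : ∀ i, i ∉ C → v i = 0) (hv0 : v ≠ 0) :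
    l2norm (X *ᵥ v) ^ 2 / l2norm v ^ 2 ∈ sparseRayleighQuotients X k := by
  obtain ⟨C', hCC', hC'⟩ := Finset.exists_superset_card_eq hC (by simpa using hk)
  have hpos := l2norm_pos hv0
  refine ⟨C', hC', (l2norm v)⁻¹ • v, fun i hi => ?_, ?_, ?_⟩
  · simp [hv i fun h => hi (hCC' h)]
  · rw [l2norm_smul, abs_of_pos (inv_pos.2 hpos), inv_mul_cancel₀ hpos.ne']
  · rw [Matrix.mulVec_smul, l2norm_smul, abs_of_pos (inv_pos.2 hpos), mul_pow, inv_pow,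
      div_eq_inv_mul]

theorem kappaMinusSq_eq_zero (hk : p < k) : kappaMinusSq X k = 0 := by
  have hempty : sparseRayleighQuotients X k = ∅ := by
    refine Set.eq_empty_of_forall_notMem ?_
    rintro _ ⟨C, hC, _⟩
    exact hk.not_ge (hC ▸ (Finset.card_le_univ C).trans_eq (Fintype.card_fin p))
  exact (congrArg sInf hempty).trans Real.sInf_empty

theorem kappaMinusSq_mul_l2norm_sq_le {C : Finset (Fin p)} (hC : C.card ≤ k) {v : Fin p → ℝ}
    (hv : ∀ i, i ∉ C → v i = 0) :
    kappaMinusSq X k * l2norm v ^ 2 ≤ l2norm (X *ᵥ v) ^ 2 := by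
  rcases lt_or_ge p k with hk | hk
  · rw [kappaMinusSq_eq_zero hk, zero_mul]
    positivity
  rcases eq_or_ne v 0 with rfl | hv0
  · simp [l2norm]
  rw [← le_div_iff₀ (pow_pos (l2norm_pos hv0) 2)]
  exact csInf_le bddBelow_sparseRayleighQuotients
    (div_l2norm_mem_sparseRayleighQuotients hk hC hv hv0)

theorem l2norm_mulVec_sq_le_kappaPlusSq_mul (hk : k ≤ p) {C : Finset (Fin p)} (hC : C.card ≤ k)
    {v : Fin p → ℝ} (hv : ∀ i, i ∉ C → v i = 0) :
    l2norm (X *ᵥ v) ^ 2 ≤ kappaPlusSq X k * l2norm v ^ 2 := by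
  rcases eq_or_ne v 0 with rfl | hv0
  · simp [l2norm]
  rw [← div_le_iff₀ (pow_pos (l2norm_pos hv0) 2)]
  exact le_csSup bddAbove_sparseRayleighQuotients
    (div_l2norm_mem_sparseRayleighQuotients hk hC hv hv0)

theorem kappaMinusSq_le_l2norm_col_sq (hk : 1 ≤ k) (j : Fin p) :
    kappaMinusSq X k ≤ l2norm (Xᵀ j) ^ 2 := by
  have h := kappaMinusSq_mul_l2norm_sq_le (X := X) (C := {j}) (v := Pi.single j 1)
    (by simpa using hk) (by simp +contextual)
  have hunit : l2norm (Pi.single j (1 : ℝ) : Fin p → ℝ) ^ 2 = 1 := by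
    simp [l2norm_sq, Pi.single_apply]
  rwa [hunit, mul_one, Matrix.mulVec_single_one] at h

variable {J : Type*}

theorem mul_transpose_apply (X : Matrix (Fin n) (Fin p) ℝ) (M : Matrix (Fin p) J ℝ) (j : J) :
    (X * M)ᵀ j = X *ᵥ Mᵀ j := by
  rw [Matrix.transpose_mul, Matrix.mul_apply_eq_vecMul, Matrix.vecMul_transpose]

variable [Fintype J]

theorem kappaMinusSq_mul_frobNorm_sq_le {M : Matrix (Fin p) J ℝ} (hM : (rowSupport M).card ≤ k) :
    kappaMinusSq X k * frobNorm M ^ 2 ≤ frobNorm (X * M) ^ 2 := by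
  simp only [frobNorm_sq_eq_sum_cols, Finset.mul_sum, mul_transpose_apply]
  exact Finset.sum_le_sum fun j _ => kappaMinusSq_mul_l2norm_sq_le hM
    fun i hi => congrFun (notMem_rowSupport.1 hi) j

theorem frobNorm_mul_sq_le_kappaPlusSq_mul (hk : k ≤ p) {M : Matrix (Fin p) J ℝ}
    (hM : (rowSupport M).card ≤ k) : frobNorm (X * M) ^ 2 ≤ kappaPlusSq X k * frobNorm M ^ 2 := by
  simp only [frobNorm_sq_eq_sum_cols, Finset.mul_sum, mul_transpose_apply]
  exact Finset.sum_le_sum fun j _ => l2norm_mulVec_sq_le_kappaPlusSq_mul hk hM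
    fun i hi => congrFun (notMem_rowSupport.1 hi) j

theorem neg_frobInner_mul_le (hk : k ≤ p) {U V : Matrix (Fin p) J ℝ}
    (hU : (rowSupport U).card ≤ k) (hV : (rowSupport V).card ≤ k)
    (hUV : Disjoint (rowSupport U) (rowSupport V)) :
    -frobInner (X * U) (X * V) ≤
      (kappaPlusSq X k - kappaMinusSq X (2 * k)) * (frobNorm U * frobNorm V) := by
  rcases (frobNorm_nonneg U).eq_or_lt with hU0 | hU0
  · rw [frobNorm_eq_zero.1 hU0.symm]
    simp [frobNorm]
  rcases (frobNorm_nonneg V).eq_or_lt with hV0 | hV0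
  · rw [frobNorm_eq_zero.1 hV0.symm]
    simp [frobNorm]
  have hcard : (rowSupport (frobNorm V • U + frobNorm U • V)).card ≤ 2 * k := by
    calc _ ≤ (rowSupport U ∪ rowSupport V).card :=
        Finset.card_le_card (rowSupport_smul_add_smul_subset _ _ U V)
      _ ≤ (rowSupport U).card + (rowSupport V).card := Finset.card_union_le _ _
      _ ≤ 2 * k := by omega
  have hlower := kappaMinusSq_mul_frobNorm_sq_le (X := X) hcard
  rw [Matrix.mul_add, Matrix.mul_smul, Matrix.mul_smul, frobNorm_smul_add_smul_sq,
    frobNorm_smul_add_smul_sq, frobInner_eq_zero_of_disjoint hUV] at hlower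
  have hupperU := mul_le_mul_of_nonneg_left (frobNorm_mul_sq_le_kappaPlusSq_mul (X := X) hk hU)
    (sq_nonneg (frobNorm V))
  have hupperV := mul_le_mul_of_nonneg_left (frobNorm_mul_sq_le_kappaPlusSq_mul (X := X) hk hV)
    (sq_nonneg (frobNorm U))
  refine le_of_mul_le_mul_left ?_ (mul_pos (mul_pos two_pos hV0) hU0)
  linarith

end SparseRiesz

section Blocks

variable {I : Type*} {a : I → ℝ} {m : ℕ} {L : ℝ}

theorem mul_sum_sq_le {T : Finset I} (ha : ∀ i, 0 ≤ a i) (hL : ∀ i ∈ T, m * a i ≤ L) :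
    m * ∑ i ∈ T, a i ^ 2 ≤ ((L + ∑ i ∈ T, a i) / 2) ^ 2 := by
  calc m * ∑ i ∈ T, a i ^ 2 = ∑ i ∈ T, m * a i * a i := by
        rw [Finset.mul_sum]
        exact Finset.sum_congr rfl fun i _ => by ring
    _ ≤ ∑ i ∈ T, L * a i :=
        Finset.sum_le_sum fun i hi => mul_le_mul_of_nonneg_right (hL i hi) (ha i)
    _ = L * ∑ i ∈ T, a i := (Finset.mul_sum _ _ _).symm
    _ ≤ ((L + ∑ i ∈ T, a i) / 2) ^ 2 := by linarith [sq_nonneg (L - ∑ i ∈ T, a i)]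

theorem sqrt_sum_sq_le_div_sqrt {T : Finset I} (ha : ∀ i, 0 ≤ a i) (hm : 0 < m) (hL0 : 0 ≤ L)
    (hT : T.card ≤ m) (hL : ∀ i ∈ T, m * a i ≤ L) : √(∑ i ∈ T, a i ^ 2) ≤ L / √m := by
  have hm' : (0 : ℝ) < m := by exact_mod_cast hm
  have hrow : ∀ i ∈ T, a i ^ 2 ≤ (L / m) ^ 2 := fun i hi =>
    pow_le_pow_left₀ (ha i) ((le_div_iff₀' hm').2 (hL i hi)) 2
  refine Real.sqrt_le_iff.2 ⟨by positivity, ?_⟩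
  calc ∑ i ∈ T, a i ^ 2 ≤ T.card * (L / m) ^ 2 := by
        rw [← nsmul_eq_mul]
        exact Finset.sum_le_card_nsmul _ _ _ hrow
    _ ≤ m * (L / m) ^ 2 := by gcongr
    _ = (L / √m) ^ 2 := by
        rw [div_pow, div_pow, Real.sq_sqrt hm'.le]
        field_simp

variable [DecidableEq I]

theorem exists_subset_card_eq_forall_le (a : I → ℝ) {U : Finset I} (hm : m ≤ U.card) :
    ∃ T ⊆ U, T.card = m ∧ ∀ i ∈ T, ∀ j ∈ U \ T, a j ≤ a i := by
  induction m with
  | zero => exact ⟨∅, by simp, by simp, by simp⟩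
  | succ m ih =>
    obtain ⟨T, hTU, hTm, hT⟩ := ih (by omega)
    have hne : (U \ T).Nonempty := by
      rw [← Finset.card_pos, Finset.card_sdiff_of_subset hTU]
      omega
    obtain ⟨q, hq, hmax⟩ := Finset.exists_max_image (U \ T) a hne
    obtain ⟨hqU, hqT⟩ := Finset.mem_sdiff.1 hq
    refine ⟨insert q T, Finset.insert_subset hqU hTU, by
      rw [Finset.card_insert_of_notMem hqT, hTm], fun i hi j hj => ?_⟩
    have hjT : j ∈ U \ T := Finset.sdiff_subset_sdiff subset_rfl (Finset.subset_insert q T) hj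
    rcases Finset.mem_insert.1 hi with rfl | hiT
    · exact hmax j hjT
    · exact hT i hiT j hjT

theorem exists_subset_card_eq_min_mul_le_sum (a : I → ℝ) (U : Finset I) (m : ℕ) :
    ∃ T ⊆ U, T.card = min m U.card ∧ ∀ j ∈ U \ T, m * a j ≤ ∑ i ∈ T, a i := by
  rcases le_total U.card m with h | h
  · exact ⟨U, subset_rfl, (min_eq_right h).symm, by simp⟩
  obtain ⟨T, hTU, hTm, hT⟩ := exists_subset_card_eq_forall_le a h
  refine ⟨T, hTU, hTm.trans (min_eq_left h).symm, fun j hj => ?_⟩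
  rw [← hTm, ← nsmul_eq_mul]
  exact Finset.card_nsmul_le_sum _ _ _ fun i hi => hT i hi j hj

theorem exists_superset_card_le_mul_le_sum_sdiff [Fintype I] (a : I → ℝ) (S : Finset I) (m : ℕ) :
    ∃ A, S ⊆ A ∧ A.card ≤ S.card + m ∧ ∀ j ∈ Aᶜ, m * a j ≤ ∑ i ∈ A \ S, a i := by
  obtain ⟨T, hTS, hTm, hT⟩ := exists_subset_card_eq_min_mul_le_sum a Sᶜ m
  refine ⟨S ∪ T, Finset.subset_union_left, (Finset.card_union_le _ _).trans (by omega), ?_⟩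
  rwa [Finset.compl_union, Finset.union_sdiff_cancel_left
    (Finset.disjoint_of_subset_right hTS disjoint_compl_right), ← Finset.sdiff_eq_inter_compl]

/- Split `U` greedily into blocks of the `m` largest remaining values: the norm of each block is
controlled by the sum over the preceding one, so the blocks add up to `L + ∑ i ∈ U, a i`. -/
theorem le_of_subadditive_of_le_on_blocks {g : Finset I → ℝ} {D : ℝ} {U : Finset I}
    (ha : ∀ i, 0 ≤ a i) (hm : 0 < m) (hD : 0 ≤ D)
    (hadd : ∀ T W, Disjoint T W → g (T ∪ W) ≤ g T + g W)
    (hg : ∀ T ⊆ U, T.card ≤ m → g T ≤ D * √(∑ i ∈ T, a i ^ 2))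
    (hL0 : 0 ≤ L) (hL : ∀ i ∈ U, m * a i ≤ L) :
    g U ≤ D / √m * (L + ∑ i ∈ U, a i) := by
  induction U using Finset.strongInduction generalizing L with
  | H U ih =>
    rcases U.eq_empty_or_nonempty with rfl | hU
    · refine (hg ∅ subset_rfl (by simp)).trans ?_
      simp only [Finset.sum_empty, Real.sqrt_zero, mul_zero, add_zero]
      positivity
    obtain ⟨T, hTU, hTm, hT⟩ := exists_subset_card_eq_min_mul_le_sum a U m
    have hTne : T.Nonempty := Finset.card_pos.1 (hTm ▸ lt_min hm hU.card_pos)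
    have hTcard : T.card ≤ m := hTm.trans_le (min_le_left _ _)
    have hhead : g T ≤ D * (L / √m) := (hg T hTU hTcard).trans <| mul_le_mul_of_nonneg_left
      (sqrt_sum_sq_le_div_sqrt ha hm hL0 hTcard fun i hi => hL i (hTU hi)) hD
    have htail : g (U \ T) ≤ D / √m * (∑ i ∈ T, a i + ∑ i ∈ U \ T, a i) :=
      ih (U \ T) (Finset.sdiff_ssubset hTU hTne)
        (fun W hW => hg W (hW.trans Finset.sdiff_subset))
        (Finset.sum_nonneg fun i _ => ha i) hT
    calc g U = g (T ∪ U \ T) := by rw [Finset.union_sdiff_of_subset hTU]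
      _ ≤ g T + g (U \ T) := hadd _ _ Finset.disjoint_sdiff
      _ ≤ D * (L / √m) + D / √m * (∑ i ∈ T, a i + ∑ i ∈ U \ T, a i) := add_le_add hhead htail
      _ = D / √m * (L + ∑ i ∈ U, a i) := by
        rw [← Finset.sum_sdiff hTU]
        ring

end Blocks

section RestrictedEigenvalue

variable {n p k m s : ℕ} {J : Type*} [Fintype J] {X : Matrix (Fin n) (Fin p) ℝ}
  {M : Matrix (Fin p) J ℝ} {A S : Finset (Fin p)} {c L : ℝ}

theorem sum_l2norm_le_sqrt_mul_frobNorm_rowRestrict (hSA : S ⊆ A) (hS : S.card ≤ s) :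
    ∑ i ∈ S, l2norm (M i) ≤ √s * frobNorm (rowRestrict A M) := by
  refine abs_le_of_sq_le_sq ?_ (mul_nonneg (Real.sqrt_nonneg _) (frobNorm_nonneg _))
    |>.trans' (le_abs_self _)
  rw [mul_pow, Real.sq_sqrt s.cast_nonneg, frobNorm_rowRestrict_sq]
  calc (∑ i ∈ S, l2norm (M i)) ^ 2 ≤ S.card * ∑ i ∈ S, l2norm (M i) ^ 2 :=
        sq_sum_le_card_mul_sum_sq
    _ ≤ s * ∑ i ∈ A, l2norm (M i) ^ 2 := by gcongr

theorem frobNorm_rowRestrict_compl_le (hm : 0 < m)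
    (hL : ∀ i ∈ Aᶜ, m * l2norm (M i) ≤ L) (hL0 : 0 ≤ L) :
    frobNorm (rowRestrict Aᶜ M) ≤ (L + ∑ i ∈ Aᶜ, l2norm (M i)) / (2 * √m) := by
  have hm' : (0 : ℝ) < m := by exact_mod_cast hm
  have hsum := Finset.sum_nonneg fun i (_ : i ∈ Aᶜ) => l2norm_nonneg (M i)
  have hsq := mul_sum_sq_le (fun i => l2norm_nonneg (M i)) hL
  rw [frobNorm_rowRestrict]
  refine Real.sqrt_le_iff.2 ⟨by positivity, ?_⟩
  rw [← div_div, div_pow, Real.sq_sqrt hm'.le, le_div_iff₀' hm']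
  exact hsq

theorem neg_frobInner_rowRestrict_compl_le (hk : k ≤ p) (hA : A.card ≤ k) (hm : 0 < m)
    (hmk : m ≤ k) {δ : ℝ} (hδ0 : 0 ≤ δ)
    (hδ : kappaPlusSq X k - kappaMinusSq X (2 * k) ≤ δ)
    (hL0 : 0 ≤ L) (hL : ∀ i ∈ Aᶜ, m * l2norm (M i) ≤ L) :
    -frobInner (X * rowRestrict A M) (X * rowRestrict Aᶜ M) ≤
      δ * frobNorm (rowRestrict A M) / √m * (L + ∑ i ∈ Aᶜ, l2norm (M i)) := by
  refine le_of_subadditive_of_le_on_blocks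
    (g := fun W => -frobInner (X * rowRestrict A M) (X * rowRestrict W M))
    (fun i => l2norm_nonneg (M i)) hm (mul_nonneg hδ0 (frobNorm_nonneg _)) (fun T W hTW => ?_)
    (fun T hT hTm => ?_) hL0 hL
  · rw [rowRestrict_union hTW, Matrix.mul_add, map_add, neg_add]
  · have hdisj : Disjoint (rowSupport (rowRestrict A M)) (rowSupport (rowRestrict T M)) :=
      (Finset.disjoint_of_subset_right hT disjoint_compl_right).mono
        (rowSupport_rowRestrict_subset A M) (rowSupport_rowRestrict_subset T M)
    have hcardA := (Finset.card_le_card (rowSupport_rowRestrict_subset A M)).trans hA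
    have hcardT :=
      (Finset.card_le_card (rowSupport_rowRestrict_subset T M)).trans (hTm.trans hmk)
    rw [mul_assoc, ← frobNorm_rowRestrict]
    exact (neg_frobInner_mul_le hk hcardA hcardT hdisj).trans (mul_le_mul_of_nonneg_right hδ
      (mul_nonneg (frobNorm_nonneg _) (frobNorm_nonneg _)))

/- The constant `6` makes the off-diagonal blocks absorb at most half of `κ₋²(k) ‖M_A‖²`. -/
theorem kappaMinusSq_div_two_mul_le_frobInner (hκ : 0 < kappaMinusSq X k) (hA : A.card ≤ k)
    (hm : 0 < m) (hmk : m ≤ k) (hc : 0 ≤ c)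
    (hδ : kappaPlusSq X k - kappaMinusSq X (2 * k) ≤ c * kappaMinusSq X k)
    (hratio : 6 * c * √s ≤ √m) (hL0 : 0 ≤ L) (hL : ∀ i ∈ Aᶜ, m * l2norm (M i) ≤ L)
    (hsum : L + ∑ i ∈ Aᶜ, l2norm (M i) ≤ 3 * √s * frobNorm (rowRestrict A M)) :
    kappaMinusSq X k / 2 * frobNorm (rowRestrict A M) ^ 2 ≤
      frobInner (X * M) (X * rowRestrict A M) := by
  have hk : k ≤ p := le_of_not_gt fun h => hκ.ne' (kappaMinusSq_eq_zero h)
  have hm' : 0 < √(m : ℝ) := Real.sqrt_pos.2 (by exact_mod_cast hm)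
  set κ := kappaMinusSq X k
  set N := frobNorm (rowRestrict A M)
  have hN : 0 ≤ N := frobNorm_nonneg _
  have hdiag : κ * N ^ 2 ≤ frobInner (X * rowRestrict A M) (X * rowRestrict A M) := by
    rw [frobInner_self]
    exact kappaMinusSq_mul_frobNorm_sq_le
      ((Finset.card_le_card (rowSupport_rowRestrict_subset A M)).trans hA)
  have hcross : -frobInner (X * rowRestrict A M) (X * rowRestrict Aᶜ M) ≤ κ / 2 * N ^ 2 := by
    calc _ ≤ c * κ * N / √m * (L + ∑ i ∈ Aᶜ, l2norm (M i)) :=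
          neg_frobInner_rowRestrict_compl_le hk hA hm hmk (by positivity) hδ hL0 hL
      _ ≤ c * κ * N / √m * (3 * √s * N) := by gcongr
      _ = κ / 2 * N ^ 2 * (6 * c * √s / √m) := by ring
      _ ≤ κ / 2 * N ^ 2 := mul_le_of_le_one_right (by positivity) ((div_le_one hm').2 hratio)
  have hsplit : frobInner (X * M) (X * rowRestrict A M) =
      frobInner (X * rowRestrict A M) (X * rowRestrict A M) +
        frobInner (X * rowRestrict A M) (X * rowRestrict Aᶜ M) := by
    rw [← map_add, ← Matrix.mul_add, rowRestrict_add_rowRestrict_compl, frobInner_comm]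
  linarith

theorem frobNorm_le_one_add_mul_frobNorm_rowRestrict (hm : 0 < m) (hc : 0 < c)
    (hratio : 6 * c * √s ≤ √m) (hL0 : 0 ≤ L) (hL : ∀ i ∈ Aᶜ, m * l2norm (M i) ≤ L)
    (hsum : L + ∑ i ∈ Aᶜ, l2norm (M i) ≤ 3 * √s * frobNorm (rowRestrict A M)) :
    frobNorm M ≤ (1 + (4 * c)⁻¹) * frobNorm (rowRestrict A M) := by
  have hm' : 0 < √(m : ℝ) := Real.sqrt_pos.2 (by exact_mod_cast hm)
  set N := frobNorm (rowRestrict A M)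
  have hN : 0 ≤ N := frobNorm_nonneg _
  have htail : frobNorm (rowRestrict Aᶜ M) ≤ (4 * c)⁻¹ * N := by
    calc _ ≤ (L + ∑ i ∈ Aᶜ, l2norm (M i)) / (2 * √m) := frobNorm_rowRestrict_compl_le hm hL hL0
      _ ≤ 3 * √s * N / (2 * √m) := by gcongr
      _ = (4 * c)⁻¹ * N * (6 * c * √s / √m) := by
        field_simp
        ring
      _ ≤ (4 * c)⁻¹ * N := mul_le_of_le_one_right (by positivity) ((div_le_one hm').2 hratio)
  linarith [frobNorm_le_rowRestrict_add_compl A M]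

theorem IsGroupLasso.frobNorm_sub_le {B Bh : Matrix (Fin p) J ℝ} {Z : Matrix (Fin n) J ℝ}
    {lam : ℝ} (h : IsGroupLasso X (X * B + Z) lam Bh) (hlam : 0 < lam)
    (hZ : ∀ i, l2norm ((Xᵀ * Z) i) ≤ lam / 2) (hs : (rowSupport B).card ≤ s) (hm : 0 < m)
    (hc : 0 < c) (hratio : 6 * c * √s ≤ √m) (hκ : 0 < kappaMinusSq X (s + m))
    (hδ : kappaPlusSq X (s + m) - kappaMinusSq X (2 * (s + m)) ≤ c * kappaMinusSq X (s + m)) :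
    frobNorm (Bh - B) ≤ 3 * (1 + (4 * c)⁻¹) * √s * lam / kappaMinusSq X (s + m) := by
  set E := Bh - B
  set S := rowSupport B
  obtain ⟨A, hSA, hAcard, hAtop⟩ :=
    exists_superset_card_le_mul_le_sum_sdiff (fun i => l2norm (E i)) S m
  have hA : A.card ≤ s + m := hAcard.trans (by omega)
  set N := frobNorm (rowRestrict A E)
  have hN : 0 ≤ N := frobNorm_nonneg _
  have hsupp : ∑ i ∈ S, l2norm (E i) ≤ √s * N :=
    sum_l2norm_le_sqrt_mul_frobNorm_rowRestrict hSA hs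
  have hL0 : 0 ≤ ∑ i ∈ A \ S, l2norm (E i) := Finset.sum_nonneg fun i _ => l2norm_nonneg (E i)
  have hsum : ∑ i ∈ A \ S, l2norm (E i) + ∑ i ∈ Aᶜ, l2norm (E i) ≤ 3 * √s * N := by
    have hcone := h.sum_compl_rowSupport_le hlam hZ
    rw [← Finset.sum_sdiff (Finset.compl_subset_compl.2 hSA), compl_sdiff_compl] at hcone
    linarith
  have hlower := kappaMinusSq_div_two_mul_le_frobInner hκ hA hm (Nat.le_add_left m s) hc.le hδ
    hratio hL0 hAtop hsum
  have hupper := h.frobInner_mul_rowRestrict_le hlam.le hZ hSA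
  have hquad : kappaMinusSq X (s + m) / 2 * N ^ 2 ≤ lam / 2 * (3 * (√s * N)) := by
    refine (hlower.trans hupper).trans (mul_le_mul_of_nonneg_left ?_ (half_pos hlam).le)
    linarith
  have hhead : N ≤ 3 * √s * lam / kappaMinusSq X (s + m) := by
    rw [le_div_iff₀ hκ]
    rcases hN.eq_or_lt with hN0 | hN0
    · rw [← hN0, zero_mul]
      positivity
    · refine le_of_mul_le_mul_left ?_ hN0
      linarith
  calc frobNorm E ≤ (1 + (4 * c)⁻¹) * N :=
        frobNorm_le_one_add_mul_frobNorm_rowRestrict hm hc hratio hL0 hAtop hsum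
    _ ≤ (1 + (4 * c)⁻¹) * (3 * √s * lam / kappaMinusSq X (s + m)) := by gcongr
    _ = _ := by ring

end RestrictedEigenvalue

section GaussianTail

/- For `1 / 2 ≤ t` the integral diverges and both sides are `0`. -/
theorem mgf_sq_gaussianReal (t : ℝ) :
    mgf (fun x => x ^ 2) (gaussianReal 0 1) t = (√(1 - 2 * t))⁻¹ := by
  have hdensity : ∀ x : ℝ, gaussianPDFReal 0 1 x • Real.exp (t * x ^ 2) =
      (√(2 * Real.pi))⁻¹ * Real.exp (-((1 - 2 * t) / 2) * x ^ 2) := fun x => by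
    simp only [gaussianPDFReal_def, NNReal.coe_one, mul_one, sub_zero, smul_eq_mul, mul_assoc,
      ← Real.exp_add]
    ring_nf
  rw [mgf, integral_gaussianReal_eq_integral_smul one_ne_zero]
  simp_rw [hdensity]
  rw [integral_const_mul, integral_gaussian, div_div_eq_mul_div, mul_comm Real.pi,
    Real.sqrt_div (by positivity), div_eq_mul_inv, inv_mul_cancel_left₀ (by positivity)]

variable {E : Type*} [NormedAddCommGroup E] [InnerProductSpace ℝ E] [FiniteDimensional ℝ E]
  [MeasurableSpace E] [BorelSpace E]

theorem mgf_norm_sq_stdGaussian (t : ℝ) :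
    mgf (fun g : E => ‖g‖ ^ 2) (stdGaussian E) t = (√(1 - 2 * t))⁻¹ ^ Module.finrank ℝ E := by
  have hnorm : ∀ x : Fin (Module.finrank ℝ E) → ℝ,
      Real.exp (t * ‖∑ i, x i • stdOrthonormalBasis ℝ E i‖ ^ 2) =
        ∏ i, Real.exp (t * x i ^ 2) := fun x => by
    rw [← Real.exp_sum, ← Finset.mul_sum, ← real_inner_self_eq_norm_sq,
      (stdOrthonormalBasis ℝ E).orthonormal.inner_sum]
    simp [sq]
  rw [stdGaussian, mgf_map (Measurable.aemeasurable (by fun_prop)) (by fun_prop)]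
  simp only [mgf, Function.comp_apply, hnorm]
  rw [integral_fintype_prod_eq_prod (f := fun _ x => Real.exp (t * x ^ 2))]
  simp [← mgf_sq_gaussianReal t, mgf]

/- The exponent `t = (1 - b⁻²) / 2` makes the moment generating function equal to `b ^ d`, and
`b ≤ exp (b - 1)` then turns Chernoff's bound into a Gaussian one. -/
theorem measureReal_stdGaussian_mul_sq_le_norm_sq_le {b : ℝ} (hb : 1 ≤ b) :
    (stdGaussian E).real {g | Module.finrank ℝ E * b ^ 2 ≤ ‖g‖ ^ 2} ≤
      Real.exp (-(Module.finrank ℝ E * (b - 1) ^ 2 / 2)) := by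
  have hb0 : 0 < b := zero_lt_one.trans_le hb
  set d := Module.finrank ℝ E
  set t := (1 - (b ^ 2)⁻¹) / 2 with ht
  have hmgf : mgf (fun g : E => ‖g‖ ^ 2) (stdGaussian E) t = b ^ d := by
    rw [mgf_norm_sq_stdGaussian, show 1 - 2 * t = b⁻¹ ^ 2 by rw [ht, inv_pow]; ring,
      Real.sqrt_sq (inv_nonneg.2 hb0.le), inv_inv]
  have hint : Integrable (fun g : E => Real.exp (t * ‖g‖ ^ 2)) (stdGaussian E) :=
    not_imp_comm.1 integral_undef (hmgf.trans_ne (pow_pos hb0 d).ne')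
  have ht0 : 0 ≤ t := div_nonneg (sub_nonneg.2 (inv_le_one_of_one_le₀ (one_le_pow₀ hb))) two_pos.le
  have hexp : b ^ d ≤ Real.exp (d * (b - 1)) := by
    rw [Real.exp_nat_mul]
    exact pow_le_pow_left₀ hb0.le (by linarith [Real.add_one_le_exp (b - 1)]) d
  calc (stdGaussian E).real {g | d * b ^ 2 ≤ ‖g‖ ^ 2}
      ≤ Real.exp (-t * (d * b ^ 2)) * b ^ d := hmgf ▸ measure_ge_le_exp_mul_mgf _ ht0 hint
    _ ≤ Real.exp (-t * (d * b ^ 2)) * Real.exp (d * (b - 1)) := by gcongr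
    _ = Real.exp (-(d * (b - 1) ^ 2 / 2)) := by
      rw [← Real.exp_add, ht]
      congr 1
      field_simp
      ring

theorem stdGaussian_sqrt_finrank_add_lt_norm_le {t : ℝ} (ht : 0 ≤ t) :
    stdGaussian E {g | √(Module.finrank ℝ E) + t < ‖g‖} ≤
      ENNReal.ofReal (Real.exp (-(t ^ 2 / 2))) := by
  rcases subsingleton_or_nontrivial E with hE | hE
  · have hempty : {g : E | √(Module.finrank ℝ E) + t < ‖g‖} = ∅ :=
      Set.eq_empty_of_forall_notMem fun g => by
        simpa [Subsingleton.elim g 0] using add_nonneg (Real.sqrt_nonneg _) ht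
    simp [hempty]
  have hd : (0 : ℝ) < Module.finrank ℝ E := Nat.cast_pos.2 Module.finrank_pos
  have hscale : √(Module.finrank ℝ E) + t =
      √(Module.finrank ℝ E) * (1 + t / √(Module.finrank ℝ E)) := by
    field_simp
  have hsubset : {g : E | √(Module.finrank ℝ E) + t < ‖g‖} ⊆
      {g | Module.finrank ℝ E * (1 + t / √(Module.finrank ℝ E)) ^ 2 ≤ ‖g‖ ^ 2} := fun g hg => by
    have hlt : √(Module.finrank ℝ E) * (1 + t / √(Module.finrank ℝ E)) < ‖g‖ := hscale ▸ hg
    have hsq := pow_le_pow_left₀ (by positivity) hlt.le 2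
    rwa [mul_pow, Real.sq_sqrt hd.le] at hsq
  refine (measure_mono hsubset).trans ?_
  rw [← ofReal_measureReal]
  refine ENNReal.ofReal_le_ofReal ((measureReal_stdGaussian_mul_sq_le_norm_sq_le
    (le_add_of_nonneg_right (by positivity))).trans_eq ?_)
  rw [add_sub_cancel_left, div_pow, Real.sq_sqrt hd.le, mul_div_cancel₀ _ hd.ne']

end GaussianTail

section GaussianMatrix

variable {n r p : ℕ} {v : ℝ≥0}

instance isProbabilityMeasure_gaussianMatrix : IsProbabilityMeasure (gaussianMatrix n r v) :=
  inferInstanceAs (IsProbabilityMeasure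
    (Measure.pi fun _ : Fin n => Measure.pi fun _ : Fin r => gaussianReal 0 v))

theorem measurable_toLp_vecMul (x : Fin n → ℝ) :
    Measurable fun Z : Matrix (Fin n) (Fin r) ℝ => WithLp.toLp 2 (x ᵥ* Z) := by
  have hentry : ∀ i k, Measurable fun Z : Matrix (Fin n) (Fin r) ℝ => Z i k := fun i k =>
    (measurable_pi_apply k).comp (measurable_pi_apply (X := fun _ : Fin n => Fin r → ℝ) i)
  refine (MeasurableEquiv.toLp 2 _).measurable.comp (measurable_pi_lambda _ fun k => ?_)
  simp only [Matrix.vecMul, dotProduct]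
  exact Finset.measurable_sum _ fun i _ => (hentry i k).const_mul (x i)

theorem charFun_map_toLp_pi_gaussianReal {ι : Type*} [Fintype ι] (u : EuclideanSpace ℝ ι) :
    charFun ((Measure.pi fun _ : ι => gaussianReal 0 v).map (WithLp.toLp 2)) u =
      Complex.exp (-(v * ‖u‖ ^ 2 / 2)) := by
  simp_rw [charFun_pi, charFun_gaussianReal, ← Complex.exp_sum, ← Complex.ofReal_pow,
    EuclideanSpace.real_norm_sq_eq]
  simp [Finset.sum_div, Finset.mul_sum]

theorem charFun_map_vecMul_gaussianMatrix (x : Fin n → ℝ) (t : EuclideanSpace ℝ (Fin r)) :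
    charFun ((gaussianMatrix n r v).map fun Z => WithLp.toLp 2 (x ᵥ* Z)) t =
      Complex.exp (-(v * l2norm x ^ 2 * ‖t‖ ^ 2 / 2)) := by
  have hinner : ∀ Z : Matrix (Fin n) (Fin r) ℝ, inner ℝ (WithLp.toLp 2 (x ᵥ* Z)) t =
      ∑ i, inner ℝ (WithLp.toLp 2 (Z i)) (x i • t) := fun Z => by
    simp only [PiLp.inner_apply, Matrix.vecMul, dotProduct, PiLp.smul_apply, smul_eq_mul,
      RCLike.inner_apply, conj_trivial, Finset.mul_sum]
    rw [Finset.sum_comm]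
    congr! 2
    ring
  have hrow : ∀ i, ∫ z : Fin r → ℝ, Complex.exp (inner ℝ (WithLp.toLp 2 z) (x i • t) * Complex.I)
      ∂(Measure.pi fun _ => gaussianReal 0 v) =
        Complex.exp (-(v * (x i ^ 2 * ‖t‖ ^ 2) / 2)) := fun i => by
    have h := charFun_map_toLp_pi_gaussianReal (v := v) (x i • t)
    rw [charFun_apply, integral_map (by fun_prop) (by fun_prop)] at h
    rw [h, norm_smul, ← Complex.ofReal_pow, mul_pow, Real.norm_eq_abs, sq_abs]
    push_cast
    rfl
  have hx : (l2norm x : ℂ) ^ 2 = ∑ i, (x i : ℂ) ^ 2 := mod_cast l2norm_sq x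
  calc charFun ((gaussianMatrix n r v).map fun Z => WithLp.toLp 2 (x ᵥ* Z)) t
      = ∫ Z : Fin n → Fin r → ℝ, ∏ i, Complex.exp
          (inner ℝ (WithLp.toLp 2 (Z i)) (x i • t) * Complex.I)
          ∂(Measure.pi fun _ => Measure.pi fun _ => gaussianReal 0 v) := by
        rw [charFun_apply, integral_map (measurable_toLp_vecMul x).aemeasurable (by fun_prop)]
        simp only [hinner, Complex.ofReal_sum, Finset.sum_mul, Complex.exp_sum]
        rfl
    _ = ∏ i, Complex.exp (-(v * (x i ^ 2 * ‖t‖ ^ 2) / 2)) := by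
        rw [integral_fintype_prod_eq_prod (f := fun i (z : Fin r → ℝ) =>
          Complex.exp (inner ℝ (WithLp.toLp 2 z) (x i • t) * Complex.I))]
        simp only [hrow]
    _ = Complex.exp (-(v * l2norm x ^ 2 * ‖t‖ ^ 2 / 2)) := by
        rw [← Complex.exp_sum, hx, Finset.mul_sum, Finset.sum_mul, Finset.sum_div,
          Finset.sum_neg_distrib]
        simp only [mul_assoc]

theorem map_vecMul_gaussianMatrix (x : Fin n → ℝ) :
    (gaussianMatrix n r v).map (fun Z => WithLp.toLp 2 (x ᵥ* Z)) =
      (stdGaussian (EuclideanSpace ℝ (Fin r))).map ((√v * l2norm x) • ·) := by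
  refine Measure.ext_of_charFun (E := EuclideanSpace ℝ (Fin r)) (funext fun t => ?_)
  rw [charFun_map_vecMul_gaussianMatrix, charFun_map_smul, charFun_stdGaussian, norm_smul]
  norm_cast
  rw [Real.norm_eq_abs, mul_pow, sq_abs, mul_pow, Real.sq_sqrt v.coe_nonneg, neg_div]

theorem gaussianMatrix_lt_l2norm_vecMul_le (x : Fin n → ℝ) {t : ℝ} (ht : 0 ≤ t) :
    gaussianMatrix n r v {Z | √v * l2norm x * (√r + t) < l2norm (x ᵥ* Z)} ≤
      ENNReal.ofReal (Real.exp (-(t ^ 2 / 2))) := by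
  set a := √v * l2norm x
  have ha : 0 ≤ a := mul_nonneg (Real.sqrt_nonneg _) (l2norm_nonneg x)
  have hset : MeasurableSet {u : EuclideanSpace ℝ (Fin r) | a * (√r + t) < ‖u‖} :=
    measurableSet_lt measurable_const measurable_norm
  simp only [l2norm_eq_norm (x ᵥ* _)]
  calc gaussianMatrix n r v {Z | a * (√r + t) < ‖WithLp.toLp 2 (x ᵥ* Z)‖}
      = (stdGaussian (EuclideanSpace ℝ (Fin r))).map (a • ·) {u | a * (√r + t) < ‖u‖} := by
        rw [← map_vecMul_gaussianMatrix, Measure.map_apply (measurable_toLp_vecMul x) hset]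
        rfl
    _ = stdGaussian (EuclideanSpace ℝ (Fin r)) {g | a * (√r + t) < a * ‖g‖} := by
        rw [Measure.map_apply (by fun_prop) hset]
        simp only [Set.preimage_ofPred_eq, norm_smul, Real.norm_of_nonneg ha]
    _ ≤ stdGaussian (EuclideanSpace ℝ (Fin r)) {g | √r + t < ‖g‖} :=
        measure_mono fun g hg => lt_of_mul_lt_mul_left hg ha
    _ ≤ ENNReal.ofReal (Real.exp (-(t ^ 2 / 2))) := by
        simpa using stdGaussian_sqrt_finrank_add_lt_norm_le (E := EuclideanSpace ℝ (Fin r)) ht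

theorem ofReal_one_sub_le_gaussianMatrix_forall_l2norm_le (X : Matrix (Fin n) (Fin p) ℝ) {η : ℝ}
    (hη : η ∈ Set.Ioc (0 : ℝ) 1) :
    ENNReal.ofReal (1 - η) ≤ gaussianMatrix n r v {Z | ∀ j, l2norm ((Xᵀ * Z) j) ≤
      √v * l2norm (Xᵀ j) * (√r + √(2 * Real.log (p / η)))} := by
  set t := √(2 * Real.log (p / η))
  set bad : Fin p → Set (Matrix (Fin n) (Fin r) ℝ) := fun j =>
    {Z | √v * l2norm (Xᵀ j) * (√r + t) < l2norm (Xᵀ j ᵥ* Z)}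
  have hbad : ∀ j, gaussianMatrix n r v (bad j) ≤ ENNReal.ofReal (η / p) := fun j => by
    have hp : (1 : ℝ) ≤ p := mod_cast j.pos
    have hlog : 0 ≤ Real.log (p / η) :=
      Real.log_nonneg ((one_le_div hη.1).2 (hη.2.trans hp))
    refine (gaussianMatrix_lt_l2norm_vecMul_le (Xᵀ j) (Real.sqrt_nonneg _)).trans_eq ?_
    rw [Real.sq_sqrt (by positivity), mul_div_cancel_left₀ _ two_ne_zero, Real.exp_neg,
      Real.exp_log (div_pos (by positivity) hη.1), inv_div]
  have hunion : gaussianMatrix n r v (⋃ j, bad j) ≤ ENNReal.ofReal η := by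
    calc gaussianMatrix n r v (⋃ j, bad j)
        ≤ ∑ j, gaussianMatrix n r v (bad j) := measure_iUnion_fintype_le _ bad
      _ ≤ ∑ _ : Fin p, ENNReal.ofReal (η / p) := Finset.sum_le_sum fun j _ => hbad j
      _ = ENNReal.ofReal (p * (η / p)) := by
        simp [ENNReal.ofReal_mul]
      _ ≤ ENNReal.ofReal η := ENNReal.ofReal_le_ofReal <| by
        rw [mul_div_left_comm]
        exact mul_le_of_le_one_right hη.1.le (div_self_le_one _)
  have hgood : (⋃ j, bad j)ᶜ = {Z | ∀ j, l2norm ((Xᵀ * Z) j) ≤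
      √v * l2norm (Xᵀ j) * (√r + t)} := by
    ext Z
    simp [bad, Matrix.mul_apply_eq_vecMul]
  rw [← hgood, ENNReal.ofReal_sub _ hη.1.le, ENNReal.ofReal_one, tsub_le_iff_left]
  calc (1 : ℝ≥0∞) = gaussianMatrix n r v Set.univ := measure_univ.symm
    _ ≤ gaussianMatrix n r v (⋃ j, bad j) + gaussianMatrix n r v (⋃ j, bad j)ᶜ :=
        measure_univ_le_add_compl _
    _ ≤ ENNReal.ofReal η + gaussianMatrix n r v (⋃ j, bad j)ᶜ := by gcongr

end GaussianMatrix

section GroupLassoBound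

variable {n r p : ℕ} {X : Matrix (Fin n) (Fin p) ℝ} {B : Matrix (Fin p) (Fin r) ℝ}

theorem mul_sqrt_le_sqrt_of_le_sqrt_div_sub_one {s m : ℕ} {c : ℝ} (hs : 1 ≤ s)
    (hc : c ≤ √(((s + m : ℕ) : ℝ) / s - 1)) : c * √s ≤ √m := by
  have hs0 : (0 : ℝ) < s := mod_cast hs
  have hdiv : ((s + m : ℕ) : ℝ) / s - 1 = m / s := by
    push_cast
    field_simp
    ring
  rwa [hdiv, Real.sqrt_div m.cast_nonneg, le_div_iff₀ (Real.sqrt_pos.2 hs0)] at hc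

theorem lt_of_pos_of_le_sqrt_div_sub_one {a b c : ℝ} (hb : 0 < b) (hc : 0 < c)
    (h : c ≤ √(a / b - 1)) : b < a := by
  have h1 := Real.sqrt_pos.1 (hc.trans_le h)
  exact (one_lt_div hb).1 (sub_pos.1 h1)

theorem pos_of_forall_mul_l2norm_col_le {k : ℕ} {lam σ η : ℝ} (hσ : 0 < σ)
    (hη : η ∈ Set.Ioo (0 : ℝ) 1) (hk : 1 ≤ k) (hκ : 0 < kappaMinusSq X k)
    (hlam : ∀ j, 2 * σ * l2norm (Xᵀ j) * (√r + √(2 * Real.log (p / η))) ≤ lam) : 0 < lam := by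
  have hkp : k ≤ p := not_lt.1 fun h => hκ.ne' (kappaMinusSq_eq_zero h)
  have hp : 0 < p := hk.trans hkp
  have hp1 : (1 : ℝ) ≤ p := mod_cast hp
  have hcol : 0 < l2norm (Xᵀ ⟨0, hp⟩) :=
    (l2norm_nonneg _).lt_of_ne' (pow_ne_zero_iff two_ne_zero |>.1
      (hκ.trans_le (kappaMinusSq_le_l2norm_col_sq hk ⟨0, hp⟩)).ne')
  have hlog : 0 < Real.log (p / η) :=
    Real.log_pos ((one_lt_div hη.1).2 (hη.2.trans_le hp1))
  exact lt_of_lt_of_le (by positivity) (hlam ⟨0, hp⟩)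

theorem stmt3_general {s sstar : ℕ} {cstar lam σ η : ℝ} (hσ : 0 < σ)
    (hη : η ∈ Set.Ioo (0 : ℝ) 1) (hs : 1 ≤ s) (hsupp : (rowSupport B).card ≤ s)
    (hcstar : 0 < cstar) (hcs : 6 * cstar ≤ √((sstar : ℝ) / s - 1))
    (hκ : 0 < kappaMinusSq X sstar)
    (hSE : (kappaPlusSq X sstar - kappaMinusSq X (2 * sstar)) / kappaMinusSq X sstar < cstar)
    (hlam : ∀ j, 2 * σ * l2norm (Xᵀ j) * (√r + √(2 * Real.log (p / η))) ≤ lam)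
    {Bhat : Matrix (Fin n) (Fin r) ℝ → Matrix (Fin p) (Fin r) ℝ}
    (hmin : ∀ Z, IsGroupLasso X (X * B + Z) lam (Bhat Z)) :
    ENNReal.ofReal (1 - η) ≤ gaussianMatrix n r (Real.toNNReal (σ ^ 2))
      {Z | frobNorm (Bhat Z - B) ≤
        3 * (1 + (4 * cstar)⁻¹) * √s * lam / kappaMinusSq X sstar} := by
  have hlt : s < sstar := mod_cast
    lt_of_pos_of_le_sqrt_div_sub_one (Nat.cast_pos.2 hs) (mul_pos (by norm_num) hcstar) hcs
  obtain ⟨m, rfl⟩ := Nat.exists_eq_add_of_le hlt.le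
  have hlam0 : 0 < lam := pos_of_forall_mul_l2norm_col_le hσ hη (le_add_right hs) hκ hlam
  have hσv : √(Real.toNNReal (σ ^ 2)) = σ := by
    rw [Real.coe_toNNReal _ (sq_nonneg σ), Real.sqrt_sq hσ.le]
  refine (ofReal_one_sub_le_gaussianMatrix_forall_l2norm_le X ⟨hη.1, hη.2.le⟩).trans
    (measure_mono fun Z hZ => ?_)
  have hnoise : ∀ j, l2norm ((Xᵀ * Z) j) ≤ lam / 2 := fun j =>
    (hZ j).trans (by rw [hσv]; linarith [hlam j])
  exact (hmin Z).frobNorm_sub_le hlam0 hnoise hsupp (Nat.lt_add_right_iff_pos.1 hlt) hcstar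
    (mul_sqrt_le_sqrt_of_le_sqrt_div_sub_one hs hcs) hκ ((div_lt_iff₀ hκ).1 hSE).le

end GroupLassoBound

/-- Group Lasso error bound with Gaussian noise. The noise matrix Z is random
with i.i.d. N(0,σ²) entries; `Bhat` is any pointwise minimizer of the group Lasso objective.
If λ ≥ 2σ max_j ‖X_{*j}‖ (√r + √(2 log(p/η))), then with probability at least 1 − η the
estimation error bound holds. -/
theorem stmt3 {n r p : ℕ} (s sstar : ℕ) (cstar K lam σ η : ℝ)
    (X : Matrix (Fin n) (Fin p) ℝ) (B : Matrix (Fin p) (Fin r) ℝ)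
    (hσ : 0 < σ) (hη : η ∈ Set.Ioo (0 : ℝ) 1)
    (hs : 1 ≤ s) (hsupp : (rowSupport B).card ≤ s)
    (hsstar : 2 * s ≤ sstar) (hcstar : 0 < cstar)
    (hcs : 6 * cstar ≤ Real.sqrt ((sstar : ℝ) / (s : ℝ) - 1))
    (hK : 1 < K) (hK1 : K⁻¹ ≤ kappaMinus X sstar)
    (hK2 : kappaMinus X sstar ≤ kappaPlus X sstar) (hK3 : kappaPlus X sstar ≤ K)
    (hSE : (kappaPlusSq X sstar - kappaMinusSq X (2 * sstar)) / kappaMinusSq X sstar < cstar)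
    (hlam : ∀ j : Fin p,
      2 * σ * l2norm (Xᵀ j) * (Real.sqrt r + Real.sqrt (2 * Real.log ((p : ℝ) / η))) ≤ lam)
    (Bhat : Matrix (Fin n) (Fin r) ℝ → Matrix (Fin p) (Fin r) ℝ)
    (hmin : ∀ Z : Matrix (Fin n) (Fin r) ℝ, ∀ B' : Matrix (Fin p) (Fin r) ℝ,
      frobNorm (X * B + Z - X * Bhat Z) ^ 2 / 2 + lam * norm21 (Bhat Z) ≤
        frobNorm (X * B + Z - X * B') ^ 2 / 2 + lam * norm21 B') :
    ENNReal.ofReal (1 - η) ≤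
      gaussianMatrix n r (Real.toNNReal (σ ^ 2))
        {Z | frobNorm (Bhat Z - B) ≤
          3 * (1 + (4 * cstar)⁻¹) * Real.sqrt s * lam / kappaMinusSq X sstar} :=
  stmt3_general hσ hη hs hsupp hcstar hcs
    (Real.sqrt_pos.1 ((inv_pos.2 (zero_lt_one.trans hK)).trans_le hK1)) hSE hlam hmin

end
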